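/- Let μ and ν be probability measures on ℝ in convex order and c, c' : ℝ² → ℝ Borel measurable cost functions such that c(x,y) ≥ a(x) + b(y) for some a ∈ L¹(μ), b ∈ L¹(ν) and c'(x,y) ≤ f(x) + g(y) for some f ∈ L¹(μ), g ∈ L¹(ν). Assume π ∈ 𝓜(μ,ν) minimises π' ↦ ∫ c dπ' over 𝓜(μ,ν) with ∫ c dπ < ∞, and among all such minimisers π'' with ∫ c' dπ'' > −∞, π maximises π'' ↦ ∫ c' dπ''. Then there exists a Borel set Γ ⊆ ℝ² with π(Γ) = 1 such that for every measure α on ℝ² with finite support contained in Γ and every competitor α' of α, one has ∫ c dα ≤ ∫ c dα', and ∫ c dα = ∫ c dα' implies ∫ c' dα ≥ ∫ c' dα'. -/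

import Mathlib

open MeasureTheory

noncomputable section

/-- A martingale coupling of `μ` and `ν`. -/
def IsMartingaleCoupling (μ ν : Measure ℝ) (π : Measure (ℝ × ℝ)) : Prop :=
  IsProbabilityMeasure π ∧ π.map Prod.fst = μ ∧ π.map Prod.snd = ν ∧
    ∀ h : ℝ → ℝ, Measurable h → (∃ C, ∀ x, |h x| ≤ C) →
      ∫ p : ℝ × ℝ, h p.1 * (p.2 - p.1) ∂π = 0

/-- `μ` and `ν` are in convex order. -/
def InConvexOrder (μ ν : Measure ℝ) : Prop :=
  ∀ φ : ℝ → ℝ, ConvexOn ℝ Set.univ φ → Integrable φ μ → Integrable φ ν →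
    ∫ x, φ x ∂μ ≤ ∫ x, φ x ∂ν

/-- `α` has finite support contained in `Γ`. -/
def HasFiniteSupportIn (α : Measure (ℝ × ℝ)) (Γ : Set (ℝ × ℝ)) : Prop :=
  ∃ S : Finset (ℝ × ℝ), ↑S ⊆ Γ ∧ α ((↑S : Set (ℝ × ℝ))ᶜ) = 0

/-- `α'` is a competitor of `α`: a finitely supported measure with the same
marginals whose fiberwise barycenters agree with those of `α`. -/
def IsCompetitor (α α' : Measure (ℝ × ℝ)) : Prop :=
  (∃ S : Finset (ℝ × ℝ), α' ((↑S : Set (ℝ × ℝ))ᶜ) = 0) ∧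
  α'.map Prod.fst = α.map Prod.fst ∧
  α'.map Prod.snd = α.map Prod.snd ∧
  ∀ x : ℝ, ∫ p in {p : ℝ × ℝ | p.1 = x}, p.2 ∂α' =
    ∫ p in {p : ℝ × ℝ | p.1 = x}, p.2 ∂α

/-!
A configuration is a pair of finitely supported measures `(α, α')`; it is bad if `α'` respects the
constraints imposed on competitors of `α` and is a lexicographic improvement of it. The claim is
that some Borel set of full `π`-measure contains the atoms of `α` for no bad configuration.

With the numbers of atoms fixed, configurations form a Polish space in which the bad ones are a
Borel set `B`. Kellerer's theorem on multimarginal null sets gives an alternative: either there is a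
`π`-conull `Γ` such that every configuration in `B` has an atom of `α` outside `Γ`, or there is a
nonzero measure `κ` on `B` whose images under the atom maps sum to at most `π`. In the second case
the mixture of the `α` under `κ` is a part of `π`, since atoms have mass at most one; exchanging it
for the mixture of the `α'` gives a plan with the same constraints which improves `π`, contradicting
optimality.

Kellerer's alternative is proved by capacities. The capacity of a set of configurations is the
infimum of `∫ f ^ 2 ∂π` over its covers, the `f ≥ 0` whose sum over the atoms of `α` is at least one
for every configuration in the set. Because of the square, near-optimal covers of increasing sets
converge by uniform convexity, so that Choquet's argument finds a compact set of positive capacity;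
there Hahn–Banach duality produces `κ`.
-/

open Filter Set Topology ProbabilityTheory
open scoped ENNReal NNReal

section QuadraticNorm

variable {Z : Type*} [MeasurableSpace Z] {ρ : Measure Z}

lemma eLpNorm_two_sq (f : Z → ℝ≥0∞) : eLpNorm f 2 ρ ^ 2 = ∫⁻ z, f z ^ 2 ∂ρ := by
  simpa using eLpNorm_nnreal_pow_eq_lintegral (μ := ρ) (f := f) (p := 2) two_ne_zero

lemma eLpNorm_tsum_le {p : ℝ≥0∞} (hp : 1 ≤ p) (hp_top : p ≠ ∞) {f : ℕ → Z → ℝ≥0∞}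
    (hf : ∀ n, Measurable (f n)) :
    eLpNorm (fun z => ∑' n, f n z) p ρ ≤ ∑' n, eLpNorm (f n) p ρ := by
  have hp_ne : p ≠ 0 := (zero_lt_one.trans_le hp).ne'
  have hp_pos : 0 < p.toReal := ENNReal.toReal_pos hp_ne hp_top
  have hpow : ∀ g : Z → ℝ≥0∞, eLpNorm g p ρ ^ p.toReal = ∫⁻ z, g z ^ p.toReal ∂ρ := fun g => by
    rw [eLpNorm_eq_lintegral_rpow_enorm_toReal hp_ne hp_top, one_div,
      ENNReal.rpow_inv_rpow hp_pos.ne']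
    rfl
  have hmono : Monotone fun n z => (∑ k ∈ Finset.range n, f k z) ^ p.toReal := fun m n hmn z =>
    ENNReal.rpow_le_rpow (Finset.sum_le_sum_of_subset (Finset.range_mono hmn)) hp_pos.le
  rw [← ENNReal.rpow_le_rpow_iff hp_pos, hpow]
  calc ∫⁻ z, (∑' n, f n z) ^ p.toReal ∂ρ
      = ∫⁻ z, ⨆ n, (∑ k ∈ Finset.range n, f k z) ^ p.toReal ∂ρ := by
        simp only [ENNReal.tsum_eq_iSup_nat, ← ENNReal.orderIsoRpow_apply p.toReal hp_pos,
          OrderIso.map_iSup]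
    _ = ⨆ n, ∫⁻ z, (∑ k ∈ Finset.range n, f k z) ^ p.toReal ∂ρ :=
        lintegral_iSup (fun n => (Finset.measurable_fun_sum _ fun k _ => hf k).pow_const _) hmono
    _ ≤ (∑' n, eLpNorm (f n) p ρ) ^ p.toReal := iSup_le fun n => by
        rw [← hpow]
        refine ENNReal.rpow_le_rpow (le_trans ?_ (ENNReal.sum_le_tsum (Finset.range n))) hp_pos.le
        simpa only [← Finset.sum_apply] using
          eLpNorm_sum_le (fun k _ => (hf k).aestronglyMeasurable) hp

lemma tsub_sq_add_add_sq_le (a b : ℝ≥0∞) : (a - b) ^ 2 + (a + b) ^ 2 ≤ 2 * (a ^ 2 + b ^ 2) := by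
  rcases eq_or_ne a ∞ with rfl | ha
  · simp
  rcases eq_or_ne b ∞ with rfl | hb
  · simp
  lift a to ℝ≥0 using ha
  lift b to ℝ≥0 using hb
  norm_cast
  rcases le_total a b with h | h
  · rw [tsub_eq_zero_of_le h, zero_pow two_ne_zero, zero_add]
    exact add_sq_le
  · obtain ⟨d, rfl⟩ := exists_add_of_le h
    rw [add_tsub_cancel_left]
    exact le_of_eq (by ring)

lemma eLpNorm_sub_sq_add_eLpNorm_add_sq_le {f g : Z → ℝ≥0∞} (hf : Measurable f)
    (hg : Measurable g) :
    eLpNorm (f - g) 2 ρ ^ 2 + eLpNorm (f + g) 2 ρ ^ 2 ≤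
      2 * (eLpNorm f 2 ρ ^ 2 + eLpNorm g 2 ρ ^ 2) := by
  simp only [eLpNorm_two_sq]
  rw [← lintegral_add_left ((hf.sub hg).pow_const 2), ← lintegral_add_left (hf.pow_const 2),
    ← lintegral_const_mul' _ _ ENNReal.ofNat_ne_top]
  exact lintegral_mono fun z => tsub_sq_add_add_sq_le (f z) (g z)

lemma le_add_tsum_tsub (u : ℕ → ℝ≥0∞) (n : ℕ) : u n ≤ u 0 + ∑' k, (u (k + 1) - u k) := by
  have h : ∀ n, u n ≤ u 0 + ∑ k ∈ Finset.range n, (u (k + 1) - u k) := fun n => by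
    induction n with
    | zero => simp
    | succ n ih =>
      rw [Finset.sum_range_succ, ← add_assoc]
      exact le_add_tsub.trans (by gcongr)
  exact (h n).trans (by gcongr; exact ENNReal.sum_le_tsum _)

lemma exists_lowerSemicontinuous_eLpNorm_sq_lt [TopologicalSpace Z] [BorelSpace Z]
    [ρ.WeaklyRegular] {f : Z → ℝ≥0∞} (hf : Measurable f) {r : ℝ≥0∞} (h : eLpNorm f 2 ρ ^ 2 < r) :
    ∃ g : Z → ℝ≥0∞, f ≤ g ∧ LowerSemicontinuous g ∧ eLpNorm g 2 ρ ^ 2 < r := by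
  obtain ⟨ε, hε, hεr⟩ := ENNReal.lt_iff_exists_add_pos_lt.1 h
  obtain ⟨g, hfg, hg, hg_int⟩ := exists_le_lowerSemicontinuous_lintegral_ge ρ (fun z => f z ^ 2)
    (hf.pow_const 2) (ENNReal.coe_ne_zero.2 hε.ne')
  have hsqrt : ∀ a : ℝ≥0∞, (a ^ (2⁻¹ : ℝ)) ^ 2 = a := ENNReal.rpow_inv_natCast_pow two_ne_zero
  refine ⟨fun z => g z ^ (2⁻¹ : ℝ), fun z => ?_, ?_, ?_⟩
  · exact (ENNReal.pow_le_pow_left_iff two_ne_zero).1 ((hfg z).trans_eq (hsqrt _).symm)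
  · exact ENNReal.continuous_rpow_const.comp_lowerSemicontinuous hg
      (ENNReal.monotone_rpow_of_nonneg (by norm_num))
  · simpa only [eLpNorm_two_sq, hsqrt] using (hg_int.trans_eq (by rw [eLpNorm_two_sq])).trans_lt hεr

end QuadraticNorm

section Capacity

variable {ι Ω Z : Type*} [Fintype ι] [MeasurableSpace Z]

/-- The function `f` charges the `p`-image of every point of `A` with total mass at least one. -/
structure IsCover (p : ι → Ω → Z) (A : Set Ω) (f : Z → ℝ≥0∞) : Prop where
  measurable : Measurable f
  one_le_sum : ∀ e ∈ A, 1 ≤ ∑ i, f (p i e)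

/-- The capacity of `A`, dual to the mass of measures `κ` on `A` with `∑ i, κ.map (p i) ≤ ρ`. The
covers are measured by their squared `L²` norm rather than by their integral: uniform convexity
then makes the capacity continuous along increasing unions. -/
def capacity (ρ : Measure Z) (p : ι → Ω → Z) (A : Set Ω) : ℝ≥0∞ :=
  ⨅ (f : Z → ℝ≥0∞) (_ : IsCover p A f), eLpNorm f 2 ρ ^ 2

variable {ρ : Measure Z} {p : ι → Ω → Z} {A B : Set Ω} {f g : Z → ℝ≥0∞}

lemma IsCover.mono (hf : IsCover p B f) (h : A ⊆ B) : IsCover p A f :=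
  ⟨hf.measurable, fun e he => hf.one_le_sum e (h he)⟩

lemma IsCover.capacity_le (hf : IsCover p A f) : capacity ρ p A ≤ eLpNorm f 2 ρ ^ 2 :=
  iInf₂_le f hf

lemma capacity_mono (h : A ⊆ B) : capacity ρ p A ≤ capacity ρ p B :=
  le_iInf₂ fun _ hf => (hf.mono h).capacity_le

lemma exists_isCover_of_capacity_lt {r : ℝ≥0∞} (h : capacity ρ p A < r) :
    ∃ f, IsCover p A f ∧ eLpNorm f 2 ρ ^ 2 < r := by
  simpa only [capacity, iInf_lt_iff, exists_prop] using h

/-- The half sum of two covers is a cover. -/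
lemma IsCover.four_mul_capacity_le (hf : IsCover p A f) (hg : IsCover p A g) :
    4 * capacity ρ p A ≤ eLpNorm (f + g) 2 ρ ^ 2 := by
  have havg : IsCover p A ((2⁻¹ : ℝ≥0∞) • (f + g)) := by
    refine ⟨(hf.measurable.add hg.measurable).const_smul _, fun e he => ?_⟩
    simp only [Pi.smul_apply, Pi.add_apply, smul_eq_mul, ← Finset.mul_sum, Finset.sum_add_distrib]
    calc (1 : ℝ≥0∞) = 2⁻¹ * (1 + 1) := by
          rw [one_add_one_eq_two, ENNReal.inv_mul_cancel two_ne_zero ENNReal.ofNat_ne_top]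
      _ ≤ _ := by gcongr; exacts [hf.one_le_sum e he, hg.one_le_sum e he]
  calc 4 * capacity ρ p A ≤ 4 * eLpNorm ((2⁻¹ : ℝ≥0∞) • (f + g)) 2 ρ ^ 2 := by
        gcongr; exact havg.capacity_le
    _ = eLpNorm (f + g) 2 ρ ^ 2 := by
        simp only [eLpNorm_two_sq, Pi.smul_apply, smul_eq_mul, mul_pow]
        rw [lintegral_const_mul _ ((hf.measurable.add hg.measurable).pow_const 2), ← mul_assoc,
          show (4 : ℝ≥0∞) = 2 ^ 2 by norm_num, ← mul_pow,
          ENNReal.mul_inv_cancel two_ne_zero ENNReal.ofNat_ne_top, one_pow, one_mul]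

lemma IsCover.eLpNorm_sub_le (hf : IsCover p A f) (hg : IsCover p A g) {s δ : ℝ≥0∞} (hs : s ≠ ∞)
    (hδ : δ ≠ ∞) (hfs : eLpNorm f 2 ρ ^ 2 ≤ s ^ 2 + δ ^ 2)
    (hgs : eLpNorm g 2 ρ ^ 2 ≤ s ^ 2 + δ ^ 2) (hsA : s ^ 2 ≤ capacity ρ p A + δ ^ 2) :
    eLpNorm (f - g) 2 ρ ≤ 3 * δ := by
  have hfin : 4 * capacity ρ p A ≠ ∞ :=
    ENNReal.mul_ne_top ENNReal.ofNat_ne_top <| ne_top_of_le_ne_top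
      (ENNReal.add_ne_top.2 ⟨ENNReal.pow_ne_top hs, ENNReal.pow_ne_top hδ⟩)
      (hf.capacity_le.trans hfs)
  refine (ENNReal.pow_le_pow_left_iff two_ne_zero).1 ((ENNReal.add_le_add_iff_right hfin).1 ?_)
  calc eLpNorm (f - g) 2 ρ ^ 2 + 4 * capacity ρ p A
      ≤ eLpNorm (f - g) 2 ρ ^ 2 + eLpNorm (f + g) 2 ρ ^ 2 := by
        gcongr; exact hf.four_mul_capacity_le hg
    _ ≤ 2 * (eLpNorm f 2 ρ ^ 2 + eLpNorm g 2 ρ ^ 2) :=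
        eLpNorm_sub_sq_add_eLpNorm_add_sq_le hf.measurable hg.measurable
    _ ≤ 2 * ((capacity ρ p A + δ ^ 2 + δ ^ 2) + (capacity ρ p A + δ ^ 2 + δ ^ 2)) := by
        gcongr <;> exact le_trans ‹_› (by gcongr)
    _ = 8 * δ ^ 2 + 4 * capacity ρ p A := by ring
    _ ≤ (3 * δ) ^ 2 + 4 * capacity ρ p A := by
        rw [mul_pow]; gcongr; norm_num

lemma exists_strictMono_isCover_near_iSup {A : ℕ → Set Ω} (hA : Monotone A) {L : ℝ≥0∞}
    (hL : L ≠ ∞) (hcap : L = ⨆ n, capacity ρ p (A n)) {η : ℕ → ℝ≥0∞} (hη : ∀ n, η n ≠ 0) :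
    ∃ (φ : ℕ → ℕ) (f : ℕ → Z → ℝ≥0∞), StrictMono φ ∧ ∀ n, IsCover p (A (φ n)) (f n) ∧
      eLpNorm (f n) 2 ρ ^ 2 ≤ L + η n ∧ L ≤ capacity ρ p (A (φ n)) + η n := by
  have hnear : ∀ n, ∃ N, ∀ k ≥ N, L ≤ capacity ρ p (A k) + η n := fun n => by
    have hlt : L < ⨆ k, (capacity ρ p (A k) + η n) := by
      rw [← ENNReal.iSup_add, ← hcap]
      exact ENNReal.lt_add_right hL (hη n)
    obtain ⟨N, hN⟩ := lt_iSup_iff.1 hlt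
    exact ⟨N, fun k hk => hN.le.trans (by gcongr; exact capacity_mono (hA hk))⟩
  obtain ⟨φ, hφ, hφ_cap⟩ := extraction_forall_of_eventually' hnear
  have hcover : ∀ n, ∃ f, IsCover p (A (φ n)) f ∧ eLpNorm f 2 ρ ^ 2 < L + η n := fun n =>
    exists_isCover_of_capacity_lt <|
      (hcap ▸ le_iSup (fun k => capacity ρ p (A k)) (φ n)).trans_lt
        (ENNReal.lt_add_right hL (hη n))
  choose f hf hf_lt using hcover
  exact ⟨φ, f, hφ, fun n => ⟨hf n, (hf_lt n).le, hφ_cap n⟩⟩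

/-- Along a fast minimising sequence of covers, the first one plus the series of truncated
increments dominates the whole sequence, hence covers the union. -/
lemma capacity_iUnion_le_add_sq {A : ℕ → Set Ω} (hA : Monotone A) {s ε : ℝ≥0∞} (hs : s ≠ ∞)
    (hcap : s ^ 2 = ⨆ n, capacity ρ p (A n)) (hε : ε ≠ 0) (hε_top : ε ≠ ∞) :
    capacity ρ p (⋃ n, A n) ≤ (s + 7 * ε) ^ 2 := by
  set δ : ℕ → ℝ≥0∞ := fun n => ε * 2⁻¹ ^ n with hδ
  have hδ_ne : ∀ n, δ n ^ 2 ≠ 0 := fun n => by simp [hδ, hε]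
  have hδ_top : ∀ n, δ n ≠ ∞ := fun n => ENNReal.mul_ne_top hε_top (by simp)
  have hδ_anti : ∀ n, δ (n + 1) ≤ δ n := fun n => by
    simp only [hδ]; gcongr ε * ?_; exact pow_le_pow_right_of_le_one' (by simp) n.le_succ
  have hδ_sum : ∑' n, δ n = 2 * ε := by
    rw [ENNReal.tsum_mul_left, ENNReal.tsum_geometric_two, mul_comm]
  obtain ⟨φ, f, hφ, hf⟩ :=
    exists_strictMono_isCover_near_iSup hA (ENNReal.pow_ne_top hs) hcap hδ_ne
  have hincr : ∀ n, eLpNorm (f (n + 1) - f n) 2 ρ ≤ 3 * δ n := fun n =>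
    ((hf (n + 1)).1.mono (hA (hφ.monotone n.le_succ))).eLpNorm_sub_le (hf n).1 hs (hδ_top n)
      ((hf (n + 1)).2.1.trans (by gcongr; exact hδ_anti n)) (hf n).2.1 (hf n).2.2
  have hf_meas : ∀ n, Measurable (f n) := fun n => (hf n).1.measurable
  have hd_meas : ∀ n, Measurable (f (n + 1) - f n) := fun n => (hf_meas _).sub (hf_meas _)
  have hG : IsCover p (⋃ n, A n) (f 0 + fun z => ∑' n, (f (n + 1) - f n) z) := by
    refine ⟨(hf_meas 0).add (Measurable.tsum hd_meas), fun e he => ?_⟩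
    obtain ⟨n, hn⟩ := mem_iUnion.1 he
    refine ((hf n).1.one_le_sum e (hA hφ.le_apply hn)).trans (Finset.sum_le_sum fun i _ => ?_)
    exact le_add_tsum_tsub (fun n => f n (p i e)) n
  refine hG.capacity_le.trans ?_
  gcongr
  calc eLpNorm (f 0 + fun z => ∑' n, (f (n + 1) - f n) z) 2 ρ
      ≤ eLpNorm (f 0) 2 ρ + ∑' n, eLpNorm (f (n + 1) - f n) 2 ρ :=
        (eLpNorm_add_le (hf_meas 0).aestronglyMeasurable
          (Measurable.tsum hd_meas).aestronglyMeasurable one_le_two).trans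
          (by gcongr; exact eLpNorm_tsum_le one_le_two ENNReal.ofNat_ne_top hd_meas)
    _ ≤ (s + ε) + ∑' n, 3 * δ n := by
        refine add_le_add ?_ (ENNReal.tsum_le_tsum hincr)
        refine (ENNReal.pow_le_pow_left_iff two_ne_zero).1 ((hf 0).2.1.trans ?_)
        simpa only [hδ, pow_zero, mul_one] using pow_add_pow_le zero_le zero_le two_ne_zero
    _ = s + 7 * ε := by rw [ENNReal.tsum_mul_left, hδ_sum]; ring

lemma capacity_iUnion_le {A : ℕ → Set Ω} (hA : Monotone A) :
    capacity ρ p (⋃ n, A n) ≤ ⨆ n, capacity ρ p (A n) := by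
  set L := ⨆ n, capacity ρ p (A n) with hL
  rcases eq_or_ne L ∞ with hL_top | hL_top
  · exact hL_top ▸ le_top
  have hsqrt : (L ^ (2⁻¹ : ℝ)) ^ 2 = L := ENNReal.rpow_inv_natCast_pow two_ne_zero L
  have hbound : ∀ᶠ ε in 𝓝[>] (0 : ℝ≥0∞),
      capacity ρ p (⋃ n, A n) ≤ (L ^ (2⁻¹ : ℝ) + 7 * ε) ^ 2 := by
    filter_upwards [self_mem_nhdsWithin, nhdsWithin_le_nhds (Iio_mem_nhds ENNReal.zero_lt_top)]
      with ε hε hε_top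
    exact capacity_iUnion_le_add_sq hA (ENNReal.rpow_ne_top_of_nonneg (by norm_num) hL_top)
      (hsqrt.trans hL) hε.ne' hε_top.ne
  have hlim : Tendsto (fun ε : ℝ≥0∞ => (L ^ (2⁻¹ : ℝ) + 7 * ε) ^ 2) (𝓝 0) (𝓝 L) := by
    have hcont : Continuous fun ε : ℝ≥0∞ => (L ^ (2⁻¹ : ℝ) + 7 * ε) ^ 2 :=
      (ENNReal.continuous_pow 2).comp
        (continuous_const.add (ENNReal.continuous_const_mul ENNReal.ofNat_ne_top))
    simpa [hsqrt] using hcont.tendsto 0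
  exact ge_of_tendsto (hlim.mono_left nhdsWithin_le_nhds) hbound

lemma exists_measurableSet_of_capacity_eq_zero (h : capacity ρ p A = 0) :
    ∃ Γ, MeasurableSet Γ ∧ ρ Γᶜ = 0 ∧ ∀ e ∈ A, ∃ i, p i e ∉ Γ := by
  have hsmall : ∀ n : ℕ, ∃ f, IsCover p A f ∧ eLpNorm f 2 ρ ^ 2 < 2⁻¹ ^ n := fun n =>
    exists_isCover_of_capacity_lt (h ▸ ENNReal.pow_pos (by simp) n)
  choose f hf hf_lt using hsmall
  have hsq_meas : ∀ n, Measurable fun z => f n z ^ 2 := fun n => (hf n).measurable.pow_const 2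
  have hint : ∫⁻ z, ∑' n, f n z ^ 2 ∂ρ ≠ ∞ := by
    have hgeom : ∑' n : ℕ, (2⁻¹ : ℝ≥0∞) ^ n ≠ ∞ := by simp
    rw [lintegral_tsum fun n => (hsq_meas n).aemeasurable]
    refine ne_top_of_le_ne_top hgeom (ENNReal.tsum_le_tsum fun n => ?_)
    exact eLpNorm_two_sq (ρ := ρ) (f n) ▸ (hf_lt n).le
  have hmeas : Measurable fun z => ∑' n, f n z ^ 2 := Measurable.tsum hsq_meas
  refine ⟨{z | ∑' n, f n z ^ 2 < ∞}, measurableSet_lt hmeas measurable_const,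
    ae_lt_top hmeas hint, fun e he => ?_⟩
  by_contra! hmem
  have hlim : Tendsto (fun n => ∑ i, f n (p i e)) atTop (𝓝 0) := by
    rw [← Finset.sum_const_zero (ι := ι) (s := Finset.univ)]
    refine tendsto_finsetSum _ fun i _ => ?_
    have hsqrt : ∀ a : ℝ≥0∞, (a ^ 2) ^ (2⁻¹ : ℝ) = a := ENNReal.pow_rpow_inv_natCast two_ne_zero
    have hsq := ENNReal.tendsto_atTop_zero_of_tsum_ne_top (hmem i).ne
    simpa [hsqrt] using hsq.ennrpow_const (2⁻¹ : ℝ)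
  exact one_ne_zero <| le_zero_iff.1 <|
    ge_of_tendsto hlim (Eventually.of_forall fun n => (hf n).one_le_sum e he)

lemma exists_isOpen_capacity_lt [TopologicalSpace Ω] [TopologicalSpace Z] [BorelSpace Z]
    [ρ.WeaklyRegular] (hp : ∀ i, Continuous (p i)) {r : ℝ≥0∞} (h : capacity ρ p A < r) :
    ∃ U, IsOpen U ∧ A ⊆ U ∧ capacity ρ p U < r := by
  obtain ⟨f, hf, hfr⟩ := exists_isCover_of_capacity_lt h
  obtain ⟨g, hfg, hg, hgr⟩ := exists_lowerSemicontinuous_eLpNorm_sq_lt hf.measurable hfr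
  obtain ⟨t, ht, htr⟩ : ∃ t : ℝ≥0, 1 < t ∧ (t : ℝ≥0∞) ^ 2 * eLpNorm g 2 ρ ^ 2 < r := by
    have hcont : Continuous fun t : ℝ≥0 => (t : ℝ≥0∞) ^ 2 * eLpNorm g 2 ρ ^ 2 :=
      (ENNReal.continuous_mul_const hgr.ne_top).comp
        ((ENNReal.continuous_pow 2).comp ENNReal.continuous_coe)
    have hlt : ∀ᶠ t : ℝ≥0 in 𝓝[>] 1, (t : ℝ≥0∞) ^ 2 * eLpNorm g 2 ρ ^ 2 < r :=
      nhdsWithin_le_nhds ((hcont.tendsto 1).eventually_lt_const (by simpa using hgr))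
    exact (eventually_mem_nhdsWithin.and hlt).exists
  have hsum_lsc : LowerSemicontinuous fun e => ∑ i, t * g (p i e) :=
    lowerSemicontinuous_sum fun i _ =>
      (ENNReal.continuous_const_mul ENNReal.coe_ne_top).comp_lowerSemicontinuous
        (hg.comp (hp i)) fun a b hab => mul_le_mul_right hab _
  refine ⟨{e | 1 < ∑ i, t * g (p i e)}, hsum_lsc.isOpen_preimage 1, fun e he => ?_, ?_⟩
  · calc (1 : ℝ≥0∞) < t * 1 := by rwa [mul_one, ENNReal.one_lt_coe_iff]
      _ ≤ t * ∑ i, g (p i e) := by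
        gcongr
        exact (hf.one_le_sum e he).trans (Finset.sum_le_sum fun i _ => hfg _)
      _ = ∑ i, t * g (p i e) := Finset.mul_sum ..
  · have hcover : IsCover p {e | 1 < ∑ i, t * g (p i e)} fun z => t * g z :=
      ⟨hg.measurable.const_mul _, fun e he => he.le⟩
    refine hcover.capacity_le.trans_lt ?_
    simpa only [eLpNorm_two_sq, mul_pow, lintegral_const_mul _ (hg.measurable.pow_const 2)]
      using htr

end Capacity

section Choquet

/-- The sequences whose first `n` terms are bounded by those of `m`. As `n` grows these sets shrink
to the compact set `Iic m`. -/
def initialBox (m : ℕ → ℕ) (n : ℕ) : Set (ℕ → ℕ) := {e | ∀ i < n, e i ≤ m i}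

lemma isCompact_Iic_nat_seq (m : ℕ → ℕ) : IsCompact (Iic m) := by
  rw [← pi_univ_Iic]
  exact isCompact_univ_pi fun i => (finite_Iic (m i)).isCompact

lemma exists_initialBox_subset {m : ℕ → ℕ} {U : Set (ℕ → ℕ)} (hU : IsOpen U) (h : Iic m ⊆ U) :
    ∃ n, initialBox m n ⊆ U := by
  by_contra! hcon
  choose e he heU using fun n => not_subset.1 (hcon n)
  obtain ⟨x, hx, φ, hφ, hlim⟩ :=
    (isCompact_Iic_nat_seq m).tendsto_subseq (x := fun n => e n ⊓ m) fun n =>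
      (inf_le_right : e n ⊓ m ≤ m)
  have hlim_e : Tendsto (fun n => e (φ n)) atTop (𝓝 x) := by
    rw [tendsto_pi_nhds] at hlim ⊢
    refine fun i => (hlim i).congr' ?_
    filter_upwards [eventually_gt_atTop i] with n hn
    exact min_eq_left (he (φ n) i (hn.trans_le hφ.le_apply))
  exact hU.isClosed_compl.mem_of_tendsto hlim_e (Eventually.of_forall fun n => heU (φ n)) (h hx)

variable {R : Type*} [CompleteLinearOrder R] {C : Set (ℕ → ℕ) → R} {δ : R}

lemma exists_forall_lt_initialBox
    (hC_iUnion : ∀ A : ℕ → Set (ℕ → ℕ), Monotone A → C (⋃ n, A n) ≤ ⨆ n, C (A n))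
    (hδ : δ < C univ) : ∃ m, ∀ n, δ < C (initialBox m n) := by
  have hstep : ∀ (n : ℕ) (s : {s // δ < C s}), ∃ k : ℕ, δ < C (s.1 ∩ {e | e n ≤ k}) := by
    rintro n ⟨s, hs⟩
    have hunion : ⋃ k, s ∩ {e | e n ≤ k} = s := by
      rw [← inter_iUnion]
      exact inter_eq_left.2 fun e _ => mem_iUnion.2 ⟨e n, le_refl (e n)⟩
    refine lt_iSup_iff.1 ((hs.trans_eq (congrArg C hunion.symm)).trans_le (hC_iUnion _ ?_))
    exact fun k l hkl => inter_subset_inter_right _ fun e he => le_trans he hkl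
  choose k hk using hstep
  let s : ℕ → {s // δ < C s} := fun n => n.rec ⟨univ, hδ⟩ fun n s => ⟨_, hk n s⟩
  refine ⟨fun n => k n (s n), fun n => ?_⟩
  suffices initialBox (fun n => k n (s n)) n = (s n).1 from this ▸ (s n).2
  induction n with
  | zero => simp [initialBox, s]
  | succ n ih =>
    change _ = (s n).1 ∩ {e | e n ≤ k n (s n)}
    rw [← ih]
    ext e
    simp [initialBox, Nat.le_iff_lt_or_eq, or_imp, forall_and]

lemma exists_isCompact_le_of_lt_univ (hC_mono : Monotone C)
    (hC_iUnion : ∀ A : ℕ → Set (ℕ → ℕ), Monotone A → C (⋃ n, A n) ≤ ⨆ n, C (A n))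
    (hC_outer : ∀ K r, IsCompact K → C K < r → ∃ U, IsOpen U ∧ K ⊆ U ∧ C U < r)
    (hδ : δ < C univ) : ∃ K, IsCompact K ∧ δ ≤ C K := by
  obtain ⟨m, hm⟩ := exists_forall_lt_initialBox hC_iUnion hδ
  refine ⟨Iic m, isCompact_Iic_nat_seq m, le_of_not_gt fun hlt => ?_⟩
  obtain ⟨U, hU, hKU, hCU⟩ := hC_outer _ _ (isCompact_Iic_nat_seq m) hlt
  obtain ⟨n, hn⟩ := exists_initialBox_subset hU hKU
  exact ((hm n).trans_le (hC_mono hn)).not_gt hCU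

end Choquet

section Duality

lemma exists_linearMap_le_sublinear_apply_eq {E : Type*} [AddCommGroup E] [Module ℝ E] {N : E → ℝ}
    (hsmul : ∀ c : ℝ, 0 < c → ∀ x, N (c • x) = c * N x) (hadd : ∀ x y, N (x + y) ≤ N x + N y)
    (v : E) : ∃ Λ : E →ₗ[ℝ] ℝ, (∀ x, Λ x ≤ N x) ∧ Λ v = N v := by
  have hzero : N 0 = 0 := by
    have h := hsmul 2 two_pos 0
    rw [smul_zero] at h
    linarith
  have hspan : ∀ t : ℝ, t * N v ≤ N (t • v) := fun t => by
    rcases lt_trichotomy t 0 with ht | rfl | ht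
    · have h := hadd (t • v) (-t • v)
      rw [← add_smul, add_neg_cancel, zero_smul, hzero, hsmul _ (neg_pos.2 ht)] at h
      linarith
    · simp [hzero]
    · exact (hsmul t ht v).ge
  have hker : ∀ t : ℝ, t • v = 0 → t • N v = 0 := fun t ht => by
    rcases smul_eq_zero.1 ht with rfl | rfl <;> simp [hzero]
  obtain ⟨Λ, hΛ_ext, hΛ_le⟩ := exists_extension_of_le_sublinear
    (LinearPMap.mkSpanSingleton' v (N v) (σ := RingHom.id ℝ) hker) N hsmul hadd <| by
      rintro ⟨x, hx⟩
      obtain ⟨t, rfl⟩ := Submodule.mem_span_singleton.1 hx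
      rw [LinearPMap.mkSpanSingleton'_apply]
      exact hspan t
  refine ⟨Λ, hΛ_le, ?_⟩
  exact (hΛ_ext ⟨v, Submodule.mem_span_singleton_self v⟩).trans
    (LinearPMap.mkSpanSingleton'_apply_self ..)

open scoped BoundedContinuousFunction

lemma measure_le_of_forall_integral_le {Z : Type*} [MeasurableSpace Z] [TopologicalSpace Z]
    [BorelSpace Z] [HasOuterApproxClosed Z] {κ ρ : Measure Z} [IsFiniteMeasure κ]
    [κ.WeaklyRegular] [IsFiniteMeasure ρ]
    (h : ∀ f : Z →ᵇ ℝ, 0 ≤ f → ∫ z, f z ∂κ ≤ ∫ z, f z ∂ρ) : κ ≤ ρ := by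
  have hlintegral : ∀ g : Z →ᵇ ℝ≥0, ∫⁻ z, g z ∂κ ≤ ∫⁻ z, g z ∂ρ := fun g => by
    rw [← ENNReal.toReal_le_toReal (g.lintegral_lt_top_of_nnreal κ).ne
        (g.lintegral_lt_top_of_nnreal ρ).ne,
      g.toReal_lintegral_coe_eq_integral, g.toReal_lintegral_coe_eq_integral]
    exact h ⟨⟨fun z => g z, NNReal.continuous_coe.comp g.continuous⟩, g.map_bounded'⟩
      fun z => (g z).2
  have hclosed : ∀ F : Set Z, IsClosed F → κ F ≤ ρ F := fun F hF =>
    ge_of_tendsto' (HasOuterApproxClosed.tendsto_lintegral_apprSeq hF ρ) fun n =>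
      (HasOuterApproxClosed.measure_le_lintegral hF κ n).trans (hlintegral _)
  refine Measure.le_iff.2 fun s hs => ENNReal.le_of_forall_pos_le_add fun ε hε _ => ?_
  obtain ⟨F, hFs, hF, hlt⟩ :=
    hs.exists_isClosed_lt_add (measure_ne_top κ s) (ENNReal.coe_ne_zero.2 hε.ne')
  exact hlt.le.trans (add_le_add_left ((hclosed F hF).trans (measure_mono hFs)) _)

variable {ι X Z : Type*} [Fintype ι] [TopologicalSpace Z]

/-- The nonnegative bounded continuous functions whose pullbacks along the `q i` add up to a
majorant of `φ`. -/
def dominatingFunctions (q : ι → X → Z) (φ : X → ℝ) : Set (Z →ᵇ ℝ) :=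
  {f | 0 ≤ f ∧ ∀ x, φ x ≤ ∑ i, f (q i x)}

variable {q : ι → X → Z} {φ ψ : X → ℝ}

lemma dominatingFunctions_nonempty [Nonempty ι] (hφ : BddAbove (range φ)) :
    (dominatingFunctions q φ).Nonempty := by
  obtain ⟨b, hb⟩ := hφ
  refine ⟨BoundedContinuousFunction.const Z |b|, fun _ => abs_nonneg b, fun x => ?_⟩
  obtain ⟨i⟩ := ‹Nonempty ι›
  exact ((hb (mem_range_self x)).trans (le_abs_self b)).trans <|
    Finset.single_le_sum (f := fun _ : ι => |b|) (fun _ _ => abs_nonneg b) (Finset.mem_univ i)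

/-- The least integral of a dominating function: the dual value of maximising `∫ φ ∂κ` over the
measures `κ` with `∑ i, κ.map (q i) ≤ ρ`. -/
def dominationCost [MeasurableSpace Z] (ρ : Measure Z) (q : ι → X → Z) (φ : X → ℝ) : ℝ :=
  ⨅ f : dominatingFunctions q φ, ∫ z, f.1 z ∂ρ

variable [MeasurableSpace Z] {ρ : Measure Z}

lemma dominationCost_le {f : Z →ᵇ ℝ} (hf : f ∈ dominatingFunctions q φ) :
    dominationCost ρ q φ ≤ ∫ z, f z ∂ρ := by
  refine ciInf_le ⟨0, ?_⟩ (⟨f, hf⟩ : dominatingFunctions q φ)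
  rintro _ ⟨g, rfl⟩
  exact integral_nonneg g.2.1

lemma dominationCost_smul_le [Nonempty ι] (hφ : BddAbove (range φ)) {c : ℝ} (hc : 0 < c) :
    dominationCost ρ q (c • φ) ≤ c * dominationCost ρ q φ := by
  have := (dominatingFunctions_nonempty (q := q) hφ).to_subtype
  rw [← div_le_iff₀' hc]
  refine le_ciInf fun f => (div_le_iff₀' hc).2 ?_
  have hf : c • f.1 ∈ dominatingFunctions q (c • φ) :=
    ⟨fun z => mul_nonneg hc.le (f.2.1 z), fun x => by
      simpa [Finset.mul_sum] using mul_le_mul_of_nonneg_left (f.2.2 x) hc.le⟩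
  simpa [integral_const_mul] using dominationCost_le (ρ := ρ) hf

lemma dominationCost_smul [Nonempty ι] (hφ : BddAbove (range φ)) {c : ℝ} (hc : 0 < c) :
    dominationCost ρ q (c • φ) = c * dominationCost ρ q φ := by
  refine (dominationCost_smul_le hφ hc).antisymm ?_
  have hcφ : BddAbove (range (c • φ)) := by
    obtain ⟨b, hb⟩ := hφ
    refine ⟨c * b, forall_mem_range.2 fun x => ?_⟩
    exact mul_le_mul_of_nonneg_left (hb (mem_range_self x)) hc.le
  have h := dominationCost_smul_le (ρ := ρ) (q := q) hcφ (inv_pos.2 hc)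
  rwa [inv_smul_smul₀ hc.ne', le_inv_mul_iff₀ hc] at h

variable [OpensMeasurableSpace Z] [IsFiniteMeasure ρ]

lemma dominationCost_add_le [Nonempty ι] (hφ : BddAbove (range φ)) (hψ : BddAbove (range ψ)) :
    dominationCost ρ q (φ + ψ) ≤ dominationCost ρ q φ + dominationCost ρ q ψ := by
  have := (dominatingFunctions_nonempty (q := q) hφ).to_subtype
  have := (dominatingFunctions_nonempty (q := q) hψ).to_subtype
  refine le_ciInf_add_ciInf fun f g => ?_
  have hfg : f.1 + g.1 ∈ dominatingFunctions q (φ + ψ) :=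
    ⟨add_nonneg f.2.1 g.2.1, fun x => by
      simpa [Finset.sum_add_distrib] using add_le_add (f.2.2 x) (g.2.2 x)⟩
  refine (dominationCost_le hfg).trans_eq ?_
  simpa using integral_add (f.1.integrable ρ) (g.1.integrable ρ)

lemma one_le_sum_min_one {a : ι → ℝ≥0∞} (h : 1 ≤ ∑ i, a i) : 1 ≤ ∑ i, min (a i) 1 := by
  by_cases hbig : ∃ i, 1 ≤ a i
  · obtain ⟨i, hi⟩ := hbig
    exact (min_eq_right hi).ge.trans <|
      Finset.single_le_sum (f := fun i => min (a i) 1) (fun _ _ => zero_le) (Finset.mem_univ i)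
  · push Not at hbig
    rwa [Finset.sum_congr rfl fun i _ => min_eq_left (hbig i).le]

lemma capacity_univ_le_ofReal_integral {f : Z →ᵇ ℝ} (hf : f ∈ dominatingFunctions q 1) :
    capacity ρ q univ ≤ ENNReal.ofReal (∫ z, f z ∂ρ) := by
  have hnonneg : ∀ z, 0 ≤ f z := hf.1
  have hcover : IsCover q univ fun z => min (ENNReal.ofReal (f z)) 1 := by
    refine ⟨f.continuous.measurable.ennreal_ofReal.min measurable_const, fun x _ => ?_⟩
    refine one_le_sum_min_one ?_
    rw [← ENNReal.ofReal_sum_of_nonneg fun i _ => hnonneg (q i x)]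
    simpa using hf.2 x
  refine hcover.capacity_le.trans ?_
  rw [eLpNorm_two_sq, ofReal_integral_eq_lintegral_ofReal (f.integrable ρ)
    (Eventually.of_forall hnonneg)]
  exact lintegral_mono fun z =>
    (pow_le_of_le_one zero_le (min_le_right _ _) two_ne_zero).trans (min_le_left _ _)

lemma capacity_univ_le_ofReal_dominationCost [Nonempty ι] :
    capacity ρ q univ ≤ ENNReal.ofReal (dominationCost ρ q 1) := by
  have hne : (dominatingFunctions q 1).Nonempty :=
    dominatingFunctions_nonempty ⟨1, by rintro _ ⟨x, rfl⟩; rfl⟩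
  have := hne.to_subtype
  have hfin : capacity ρ q univ ≠ ∞ :=
    ne_top_of_le_ne_top ENNReal.ofReal_ne_top (capacity_univ_le_ofReal_integral hne.some_mem)
  have hle : ∀ f : dominatingFunctions q 1, (capacity ρ q univ).toReal ≤ ∫ z, f.1 z ∂ρ := fun f =>
    (ENNReal.le_ofReal_iff_toReal_le hfin (integral_nonneg f.2.1)).1
      (capacity_univ_le_ofReal_integral f.2)
  exact (ENNReal.le_ofReal_iff_toReal_le hfin (Real.iInf_nonneg fun f => integral_nonneg f.2.1)).2
    (le_ciInf hle)

variable [TopologicalSpace X]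

lemma exists_isFiniteMeasure_integral_eq [CompactSpace X] [T2Space X] [MeasurableSpace X]
    [BorelSpace X] (Λ : C(X, ℝ) →ₗ[ℝ] ℝ) (hΛ : ∀ φ, 0 ≤ φ → 0 ≤ Λ φ) :
    ∃ κ : Measure X, IsFiniteMeasure κ ∧ ∀ φ : C(X, ℝ), ∫ x, φ x ∂κ = Λ φ := by
  let toContinuousMap : CompactlySupportedContinuousMap X ℝ →ₗ[ℝ] C(X, ℝ) :=
    { toFun := fun φ => φ, map_add' := fun _ _ => rfl, map_smul' := fun _ _ => rfl }
  let Λ' := PositiveLinearMap.mk₀ (Λ ∘ₗ toContinuousMap) fun φ hφ => hΛ _ hφ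
  exact ⟨RealRMK.rieszMeasure Λ', inferInstance, fun φ =>
    RealRMK.integral_rieszMeasure Λ' (CompactlySupportedContinuousMap.continuousMapEquiv φ)⟩

lemma exists_measure_real_univ_eq_dominationCost [Nonempty ι] [BorelSpace Z]
    [HasOuterApproxClosed Z] [TopologicalSpace.PseudoMetrizableSpace Z]
    [CompactSpace X] [T2Space X] [MeasurableSpace X] [BorelSpace X]
    (hq : ∀ i, Continuous (q i)) :
    ∃ κ : Measure X, IsFiniteMeasure κ ∧ κ.real univ = dominationCost ρ q 1 ∧
      ∑ i, κ.map (q i) ≤ ρ := by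
  have hbdd : ∀ φ : C(X, ℝ), BddAbove (range φ) := fun φ =>
    (isCompact_range φ.continuous).bddAbove
  obtain ⟨Λ, hΛ_le, hΛ_one⟩ := exists_linearMap_le_sublinear_apply_eq
    (N := fun φ : C(X, ℝ) => dominationCost ρ q φ)
    (fun c hc φ => dominationCost_smul (hbdd φ) hc)
    (fun φ ψ => dominationCost_add_le (hbdd φ) (hbdd ψ)) 1
  have hΛ_nonneg : ∀ φ, 0 ≤ φ → 0 ≤ Λ φ := fun φ hφ => by
    have hzero : (0 : Z →ᵇ ℝ) ∈ dominatingFunctions q (-φ) :=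
      ⟨le_rfl, fun x => by simpa using hφ x⟩
    simpa using (hΛ_le (-φ)).trans (dominationCost_le hzero)
  obtain ⟨κ, hκ_fin, hκ⟩ := exists_isFiniteMeasure_integral_eq Λ hΛ_nonneg
  refine ⟨κ, hκ_fin, ?_, measure_le_of_forall_integral_le fun f hf => ?_⟩
  · simpa using (hκ 1).trans hΛ_one
  · let φ : C(X, ℝ) := ∑ i, f.toContinuousMap.comp ⟨q i, hq i⟩
    have hφ : ∀ x, φ x = ∑ i, f (q i x) := fun x => by simp [φ]
    have hint : ∀ i, Integrable (fun x => f (q i x)) κ := fun i =>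
      (f.compContinuous ⟨q i, hq i⟩).integrable κ
    calc ∫ z, f z ∂(∑ i, κ.map (q i)) = ∑ i, ∫ x, f (q i x) ∂κ := by
          rw [integral_finsetSum_measure fun i _ => f.integrable _]
          exact Finset.sum_congr rfl fun i _ => integral_map (hq i).measurable.aemeasurable
            f.continuous.measurable.aestronglyMeasurable
      _ = Λ φ := by simp_rw [← integral_finsetSum _ fun i _ => hint i, ← hφ, hκ]
      _ ≤ dominationCost ρ q φ := hΛ_le φ
      _ ≤ ∫ z, f z ∂ρ := dominationCost_le ⟨hf, fun x => (hφ x).le⟩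

end Duality

section Kellerer

variable {ι Ω Ω' Z : Type*} [Fintype ι] [MeasurableSpace Z] {ρ : Measure Z}

lemma capacity_comp_univ_eq_range (p : ι → Ω → Z) (F : Ω' → Ω) :
    capacity ρ (fun i => p i ∘ F) univ = capacity ρ p (range F) := by
  have hcover : ∀ f, IsCover (fun i => p i ∘ F) univ f ↔ IsCover p (range F) f := fun f =>
    ⟨fun h => ⟨h.measurable, forall_mem_range.2 fun x => h.one_le_sum x trivial⟩,
      fun h => ⟨h.measurable, fun x _ => h.one_le_sum (F x) (mem_range_self x)⟩⟩
  simp only [capacity, hcover]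

variable [TopologicalSpace Z] [BorelSpace Z] [TopologicalSpace.PseudoMetrizableSpace Z]
  [IsFiniteMeasure ρ]

lemma exists_measure_ne_zero_of_isCompact [Nonempty ι] [TopologicalSpace Ω] [T2Space Ω]
    [MeasurableSpace Ω] [BorelSpace Ω] {p : ι → Ω → Z} (hp : ∀ i, Continuous (p i)) {K : Set Ω}
    (hK : IsCompact K) (hcap : capacity ρ p K ≠ 0) :
    ∃ κ : Measure Ω, IsFiniteMeasure κ ∧ κ ≠ 0 ∧ ∑ i, κ.map (p i) ≤ ρ := by
  let := TopologicalSpace.pseudoMetrizableSpacePseudoMetric Z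
  have : CompactSpace K := isCompact_iff_compactSpace.1 hK
  have hq : ∀ i, Continuous (p i ∘ ((↑) : K → Ω)) := fun i => (hp i).comp continuous_subtype_val
  obtain ⟨κ, hκ, hκ_univ, hκ_le⟩ := exists_measure_real_univ_eq_dominationCost (ρ := ρ) hq
  refine ⟨κ.map (↑), inferInstance, ?_, ?_⟩
  · rw [Ne, Measure.map_eq_zero_iff measurable_subtype_coe.aemeasurable]
    rintro rfl
    refine hcap (le_zero_iff.1 ?_)
    calc capacity ρ p K = capacity ρ (fun i => p i ∘ ((↑) : K → Ω)) univ := by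
          rw [capacity_comp_univ_eq_range, Subtype.range_coe]
      _ ≤ ENNReal.ofReal (dominationCost ρ (fun i => p i ∘ ((↑) : K → Ω)) 1) :=
          capacity_univ_le_ofReal_dominationCost
      _ = 0 := by simp [← hκ_univ]
  · simpa only [Measure.map_map (hp _).measurable measurable_subtype_coe] using hκ_le

lemma exists_measure_ne_zero_of_capacity_univ_ne_zero [Nonempty ι] {p : ι → (ℕ → ℕ) → Z}
    (hp : ∀ i, Continuous (p i)) (hcap : capacity ρ p univ ≠ 0) :
    ∃ κ : Measure (ℕ → ℕ), IsFiniteMeasure κ ∧ κ ≠ 0 ∧ ∑ i, κ.map (p i) ≤ ρ := by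
  obtain ⟨δ, hδ, hδ_lt⟩ := exists_between (pos_iff_ne_zero.2 hcap)
  obtain ⟨K, hK, hδK⟩ := exists_isCompact_le_of_lt_univ (C := capacity ρ p)
    (fun _ _ => capacity_mono) (fun _ => capacity_iUnion_le)
    (fun _ _ _ => exists_isOpen_capacity_lt hp) hδ_lt
  exact exists_measure_ne_zero_of_isCompact hp hK (hδ.trans_le hδK).ne'

theorem exists_measurableSet_or_exists_measure_sum_map_le [TopologicalSpace Ω] [PolishSpace Ω]
    [MeasurableSpace Ω] [BorelSpace Ω] {p : ι → Ω → Z} (hp : ∀ i, Continuous (p i)) {B : Set Ω}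
    (hB : MeasurableSet B) :
    (∃ Γ, MeasurableSet Γ ∧ ρ Γᶜ = 0 ∧ ∀ e ∈ B, ∃ i, p i e ∉ Γ) ∨
      ∃ κ : Measure Ω, IsFiniteMeasure κ ∧ κ ≠ 0 ∧ κ Bᶜ = 0 ∧ ∑ i, κ.map (p i) ≤ ρ := by
  rcases B.eq_empty_or_nonempty with rfl | ⟨e₀, he₀⟩
  · exact .inl ⟨univ, .univ, by simp, by simp⟩
  rcases isEmpty_or_nonempty ι with hι | hι
  · refine .inr ⟨Measure.dirac e₀, inferInstance, IsProbabilityMeasure.ne_zero _, ?_, ?_⟩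
    · simpa [Measure.dirac_apply' _ hB.compl] using he₀
    · simpa using Measure.zero_le ρ
  have hB_analytic := hB.analyticSet
  rw [AnalyticSet] at hB_analytic
  obtain ⟨F, hF, rfl⟩ := hB_analytic.resolve_left (nonempty_of_mem he₀).ne_empty
  have hpF : ∀ i, Continuous (p i ∘ F) := fun i => (hp i).comp hF
  by_cases hcap : capacity ρ p (range F) = 0
  · exact .inl (exists_measurableSet_of_capacity_eq_zero hcap)
  rw [← capacity_comp_univ_eq_range] at hcap
  obtain ⟨κ, hκ, hκ_ne, hκ_le⟩ := exists_measure_ne_zero_of_capacity_univ_ne_zero hpF hcap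
  refine .inr ⟨κ.map F, inferInstance, ?_, ?_, ?_⟩
  · rwa [Ne, Measure.map_eq_zero_iff hF.measurable.aemeasurable]
  · rw [Measure.map_apply hF.measurable hB.compl, preimage_compl, preimage_range, compl_univ,
      measure_empty]
  · simpa only [Measure.map_map (hp _).measurable hF.measurable] using hκ_le

end Kellerer

section Improvement

variable {E Y Z : Type*} [MeasurableSpace E] [MeasurableSpace Y] [MeasurableSpace Z]

/-- The constraints a competitor respects: the images under `t` of the signed measures `ψ • α` and
`ψ • α'` agree, tested against bounded measurable functions. -/
def IsBalanced (t : Z → Y) (ψ : Z → ℝ) (α α' : Measure Z) : Prop :=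
  ∀ h : Y → ℝ, Measurable h → (∃ C, ∀ y, |h y| ≤ C) →
    ∫ z, h (t z) * ψ z ∂α' = ∫ z, h (t z) * ψ z ∂α

/-- `α'` is strictly better than `α` for the lexicographic problem of minimising the `c`-cost and,
among equal `c`-costs, maximising the `c'`-cost. -/
def IsImprovement (c c' : Z → ℝ) (α α' : Measure Z) : Prop :=
  ∫ z, c z ∂α' < ∫ z, c z ∂α ∨ ∫ z, c z ∂α' = ∫ z, c z ∂α ∧ ∫ z, c' z ∂α < ∫ z, c' z ∂α'

variable {c c' f ψ : Z → ℝ} {t : Z → Y} {α α' π β β' : Measure Z} {κ : Measure E}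
  {k k' : Kernel E Z}

lemma not_isImprovement_iff : ¬ IsImprovement c c' α α' ↔
    ∫ z, c z ∂α ≤ ∫ z, c z ∂α' ∧
      (∫ z, c z ∂α = ∫ z, c z ∂α' → ∫ z, c' z ∂α' ≤ ∫ z, c' z ∂α) := by
  rw [IsImprovement, not_or, not_and, not_lt, not_lt, eq_comm]

lemma IsImprovement.integral_le (h : IsImprovement c c' α α') :
    ∫ z, c z ∂α' ≤ ∫ z, c z ∂α :=
  h.elim le_of_lt fun h => h.1.le

lemma isImprovement_smul_iff {K : ℝ≥0∞} (hK : K ≠ 0) (hK_top : K ≠ ∞) :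
    IsImprovement c c' (K • α) (K • α') ↔ IsImprovement c c' α α' := by
  have hpos : 0 < K.toReal := ENNReal.toReal_pos hK hK_top
  simp only [IsImprovement, integral_smul_measure, smul_eq_mul, mul_lt_mul_iff_right₀ hpos,
    mul_right_inj' hpos.ne']

lemma measurableSet_isImprovement [IsSFiniteKernel k] [IsSFiniteKernel k'] (hc : Measurable c)
    (hc' : Measurable c') : MeasurableSet {e | IsImprovement c c' (k e) (k' e)} := by
  have hmeas : ∀ f : Z → ℝ, Measurable f → ∀ η : Kernel E Z, IsSFiniteKernel η →
      Measurable fun e => ∫ z, f z ∂(η e) := fun f hf η _ =>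
    hf.stronglyMeasurable.integral_kernel.measurable
  have hk := hmeas c hc k inferInstance
  have hk' := hmeas c hc k' inferInstance
  exact (measurableSet_lt hk' hk).union ((measurableSet_eq_fun hk' hk).inter
    (measurableSet_lt (hmeas c' hc' k inferInstance) (hmeas c' hc' k' inferInstance)))

lemma integral_comp_measure (hf : Integrable f (k ∘ₘ κ)) :
    ∫ z, f z ∂(k ∘ₘ κ) = ∫ e, ∫ z, f z ∂(k e) ∂κ := by
  rw [Measure.comp_eq_comp_const_apply] at hf ⊢
  exact Kernel.integral_comp hf

lemma integrable_integral_of_comp_measure (hf : Integrable f (k ∘ₘ κ)) :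
    Integrable (fun e => ∫ z, f z ∂(k e)) κ := by
  rw [Measure.comp_eq_comp_const_apply] at hf
  exact hf.integral_comp

lemma isImprovement_comp_measure (hκ : κ ≠ 0)
    (hc : Integrable c (k ∘ₘ κ + k' ∘ₘ κ)) (hc' : Integrable c' (k ∘ₘ κ + k' ∘ₘ κ))
    (h : ∀ᵐ e ∂κ, IsImprovement c c' (k e) (k' e)) :
    IsImprovement c c' (k ∘ₘ κ) (k' ∘ₘ κ) := by
  rw [integrable_add_measure] at hc hc'
  have hle : (fun e => ∫ z, c z ∂(k' e)) ≤ᵐ[κ] fun e => ∫ z, c z ∂(k e) :=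
    h.mono fun e he => he.integral_le
  simp only [IsImprovement, integral_comp_measure hc.1, integral_comp_measure hc.2,
    integral_comp_measure hc'.1, integral_comp_measure hc'.2]
  have hint := integrable_integral_of_comp_measure hc.1
  have hint_k' := integrable_integral_of_comp_measure hc.2
  refine (integral_mono_ae hint_k' hint hle).lt_or_eq.imp_right fun heq => ⟨heq, ?_⟩
  have hlt : ∀ᵐ e ∂κ, ∫ z, c' z ∂(k e) < ∫ z, c' z ∂(k' e) := by
    filter_upwards [h, (integral_eq_iff_of_ae_le hint_k' hint hle).1 heq] with e he heq_e
    exact (he.resolve_left heq_e.not_lt).2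
  have hint' := integrable_integral_of_comp_measure hc'.1
  have hint_k'' := integrable_integral_of_comp_measure hc'.2
  refine (integral_mono_ae hint' hint_k'' (hlt.mono fun e => le_of_lt)).lt_of_ne fun heq' => hκ ?_
  have hae_eq := (integral_eq_iff_of_ae_le hint' hint_k'' (hlt.mono fun e => le_of_lt)).1 heq'
  refine ae_eq_bot.1 (eventually_false_iff_eq_bot.1 ?_)
  filter_upwards [hlt, hae_eq] with e he heq_e using he.ne heq_e

/-- The transport plan obtained from `π` by replacing its part `β` with `β'`. -/
def exchange (π β β' : Measure Z) : Measure Z := π - β + β'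

instance [IsFiniteMeasure π] [IsFiniteMeasure β'] : IsFiniteMeasure (exchange π β β') :=
  inferInstanceAs (IsFiniteMeasure (π - β + β'))

variable [IsFiniteMeasure β]

lemma integrable_exchange_iff (hβ : β ≤ π) (hf : Integrable f (β + β')) :
    Integrable f (exchange π β β') ↔ Integrable f π := by
  rw [integrable_add_measure] at hf
  conv_rhs => rw [← Measure.sub_add_cancel_of_le hβ]
  simp only [exchange, integrable_add_measure, hf.1, hf.2]

lemma integral_exchange (hβ : β ≤ π) (hf : Integrable f (β + β')) (hfπ : Integrable f π) :
    ∫ z, f z ∂(exchange π β β') = ∫ z, f z ∂π + (∫ z, f z ∂β' - ∫ z, f z ∂β) := by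
  rw [integrable_add_measure] at hf
  have hsub : Integrable f (π - β) := hfπ.mono_measure Measure.sub_le
  conv_rhs => rw [← Measure.sub_add_cancel_of_le hβ]
  rw [exchange, integral_add_measure hsub hf.1, integral_add_measure hsub hf.2]
  ring

/-- If `f` is not `π`-integrable, both integrals have the junk value `0`. -/
lemma integral_exchange_eq (hβ : β ≤ π) (hf : Integrable f (β + β'))
    (h : ∫ z, f z ∂β' = ∫ z, f z ∂β) : ∫ z, f z ∂(exchange π β β') = ∫ z, f z ∂π := by
  by_cases hfπ : Integrable f π
  · rw [integral_exchange hβ hf hfπ, h, sub_self, add_zero]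
  · rw [integral_undef hfπ, integral_undef (mt (integrable_exchange_iff hβ hf).1 hfπ)]

lemma IsImprovement.exchange (h : IsImprovement c c' β β') (hβ : β ≤ π)
    (hc : Integrable c (β + β')) (hc' : Integrable c' (β + β')) (hcπ : Integrable c π)
    (hcπ' : Integrable c' π) : IsImprovement c c' π (exchange π β β') := by
  rw [IsImprovement, integral_exchange hβ hc hcπ, integral_exchange hβ hc' hcπ']
  exact h.imp (fun h => by linarith) fun h => ⟨by linarith, by linarith⟩

lemma integrable_comp_mul_of_bounded (ht : Measurable t) {h : Y → ℝ} (hh : Measurable h)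
    (hbdd : ∃ C, ∀ y, |h y| ≤ C) (hψ : Integrable ψ α) :
    Integrable (fun z => h (t z) * ψ z) α := by
  obtain ⟨C, hC⟩ := hbdd
  exact hψ.bdd_mul (hh.comp ht).aestronglyMeasurable (Eventually.of_forall fun z => hC (t z))

lemma isBalanced_comp_measure (ht : Measurable t) (hψ : Integrable ψ (k ∘ₘ κ + k' ∘ₘ κ))
    (h : ∀ᵐ e ∂κ, IsBalanced t ψ (k e) (k' e)) : IsBalanced t ψ (k ∘ₘ κ) (k' ∘ₘ κ) := by
  intro g hg hbdd
  rw [integrable_add_measure] at hψ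
  rw [integral_comp_measure (integrable_comp_mul_of_bounded ht hg hbdd hψ.1),
    integral_comp_measure (integrable_comp_mul_of_bounded ht hg hbdd hψ.2)]
  exact integral_congr_ae (h.mono fun e he => he g hg hbdd)

lemma IsBalanced.exchange (h : IsBalanced t ψ β β') (ht : Measurable t) (hβ : β ≤ π)
    (hψ : Integrable ψ (β + β')) : IsBalanced t ψ π (exchange π β β') := fun g hg hbdd =>
  integral_exchange_eq hβ (integrable_comp_mul_of_bounded ht hg hbdd hψ) (h g hg hbdd)

end Improvement

section MixedImprovement

variable {J E Y Z : Type*} [MeasurableSpace E] [MeasurableSpace Y] [MeasurableSpace Z]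
  {π : Measure Z} {κ : Measure E} {k k' : Kernel E Z}

lemma exists_restrict_forall_integrable [IsFiniteMeasure κ] (hκ : κ ≠ 0) {ι : Type*} [Finite ι]
    {f : ι → Z → ℝ} (hf : ∀ i, Measurable (f i)) (hint : ∀ i e, Integrable (f i) (k e)) :
    ∃ S, MeasurableSet S ∧ κ.restrict S ≠ 0 ∧
      ∀ i, Integrable (f i) (k ∘ₘ κ.restrict S) := by
  have := Fintype.ofFinite ι
  have hmeas : Measurable fun e => ∑ i, ∫⁻ z, ‖f i z‖ₑ ∂(k e) :=
    Finset.measurable_fun_sum _ fun i _ => (hf i).enorm.lintegral_kernel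
  have hlt : ∀ e, ∑ i, ∫⁻ z, ‖f i z‖ₑ ∂(k e) < ∞ := fun e =>
    ENNReal.sum_lt_top.2 fun i _ => (hint i e).2
  obtain ⟨n, hn⟩ : ∃ n : ℕ, κ {e | ∑ i, ∫⁻ z, ‖f i z‖ₑ ∂(k e) ≤ n} ≠ 0 := by
    by_contra! hnull
    refine hκ (Measure.measure_univ_eq_zero.1 (measure_mono_null (fun e _ => ?_)
      (measure_iUnion_null hnull)))
    obtain ⟨n, hn⟩ := ENNReal.exists_nat_gt (hlt e).ne
    exact mem_iUnion.2 ⟨n, hn.le⟩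
  set S := {e | ∑ i, ∫⁻ z, ‖f i z‖ₑ ∂(k e) ≤ n}
  have hS : MeasurableSet S := measurableSet_le hmeas measurable_const
  refine ⟨S, hS, mt Measure.restrict_eq_zero.1 hn,
    fun i => ⟨(hf i).aestronglyMeasurable, ?_⟩⟩
  rw [HasFiniteIntegral, Measure.lintegral_bind k.measurable.aemeasurable (hf i).enorm.aemeasurable]
  calc ∫⁻ e in S, ∫⁻ z, ‖f i z‖ₑ ∂(k e) ∂κ ≤ ∫⁻ _ in S, n ∂κ :=
        setLIntegral_mono measurable_const fun e he => le_trans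
          (Finset.single_le_sum (f := fun i => ∫⁻ z, ‖f i z‖ₑ ∂(k e)) (fun _ _ => zero_le)
            (Finset.mem_univ i)) he
    _ < ∞ := by
        rw [setLIntegral_const]
        exact ENNReal.mul_lt_top (ENNReal.natCast_lt_top n) (measure_lt_top κ S)

lemma exists_isImprovement_of_comp_measure_le [Finite J] {t : J → Z → Y} {ψ : J → Z → ℝ}
    {c c' : Z → ℝ} (ht : ∀ j, Measurable (t j)) (hψ : ∀ j, Measurable (ψ j))
    (hc : Measurable c) (hc' : Measurable c') [IsFiniteMeasure π] (hcπ : Integrable c π)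
    (hcπ' : Integrable c' π) [IsFiniteMeasure κ] [IsFiniteKernel k'] (hκ : κ ≠ 0)
    (hle : k ∘ₘ κ ≤ π) (hint : ∀ f : Z → ℝ, Measurable f → ∀ e, Integrable f (k e + k' e))
    (h : ∀ᵐ e ∂κ, (∀ j, IsBalanced (t j) (ψ j) (k e) (k' e)) ∧ IsImprovement c c' (k e) (k' e)) :
    ∃ π' : Measure Z, IsFiniteMeasure π' ∧ (∀ j, IsBalanced (t j) (ψ j) π π') ∧
      Integrable c π' ∧ Integrable c' π' ∧ IsImprovement c c' π π' := by
  have hmeas : ∀ i, Measurable (Sum.elim ![c, c'] ψ i) := by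
    rintro (i | j)
    · fin_cases i
      exacts [hc, hc']
    · exact hψ j
  obtain ⟨S, hS, hκS, hS_int⟩ := exists_restrict_forall_integrable (k := k + k') hκ hmeas
    fun i e => hint _ (hmeas i) e
  simp only [Measure.add_comp] at hS_int
  have hle_S : k ∘ₘ κ.restrict S ≤ π :=
    calc k ∘ₘ κ.restrict S ≤ k ∘ₘ κ.restrict S + k ∘ₘ κ.restrict Sᶜ := Measure.le_add_right le_rfl
      _ = k ∘ₘ κ := by rw [← Measure.comp_add, Measure.restrict_add_restrict_compl hS]
      _ ≤ π := hle
  have : IsFiniteMeasure (k ∘ₘ κ.restrict S) := isFiniteMeasure_of_le π hle_S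
  have h_S := ae_restrict_of_ae (s := S) h
  have hcS : Integrable c (k ∘ₘ κ.restrict S + k' ∘ₘ κ.restrict S) := hS_int (.inl 0)
  have hcS' : Integrable c' (k ∘ₘ κ.restrict S + k' ∘ₘ κ.restrict S) := hS_int (.inl 1)
  refine ⟨exchange π (k ∘ₘ κ.restrict S) (k' ∘ₘ κ.restrict S), inferInstance, fun j => ?_,
    (integrable_exchange_iff hle_S hcS).2 hcπ, (integrable_exchange_iff hle_S hcS').2 hcπ', ?_⟩
  · exact (isBalanced_comp_measure (ht j) (hS_int (.inr j)) (h_S.mono fun e he => he.1 j)).exchange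
      (ht j) hle_S (hS_int (.inr j))
  · exact (isImprovement_comp_measure hκS hcS hcS' (h_S.mono fun e he => he.2)).exchange hle_S
      hcS hcS' hcπ hcπ'

end MixedImprovement

section AtomicMeasure

variable {ι Z : Type*} [Fintype ι] [MeasurableSpace Z] {w : ι → unitInterval × Z} {f : Z → ℝ}
  {α : Measure Z}

/-- The finitely supported measure with an atom of mass `(w i).1` at `(w i).2` for each `i`.
Restricting the masses to `[0, 1]` keeps `atomicKernel` finite. -/
def atomicMeasure (w : ι → unitInterval × Z) : Measure Z :=
  ∑ i, ENNReal.ofReal (w i).1 • Measure.dirac (w i).2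

lemma atomicMeasure_apply {s : Set Z} (hs : MeasurableSet s) :
    atomicMeasure w s = ∑ i, ENNReal.ofReal (w i).1 * s.indicator 1 (w i).2 := by
  simp [atomicMeasure, Measure.dirac_apply' _ hs]

lemma ae_atomicMeasure {s : Set Z} (hs : MeasurableSet s) (h : ∀ i, (w i).2 ∈ s) :
    ∀ᵐ z ∂(atomicMeasure w), z ∈ s := by
  rw [ae_iff, ← Set.compl_ofPred, ofPred_mem_eq, atomicMeasure_apply hs.compl]
  simp [h]

instance : IsFiniteMeasure (atomicMeasure w) :=
  ⟨by simp [atomicMeasure_apply MeasurableSet.univ, ENNReal.sum_lt_top]⟩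

lemma integrable_atomicMeasure (hf : Measurable f) : Integrable f (atomicMeasure w) :=
  integrable_finsetSum_measure.2 fun i _ =>
    (integrable_dirac' hf.stronglyMeasurable (by simp)).smul_measure ENNReal.ofReal_ne_top

lemma integral_atomicMeasure (hf : Measurable f) :
    ∫ z, f z ∂(atomicMeasure w) = ∑ i, (w i).1 * f (w i).2 := by
  rw [atomicMeasure, integral_finsetSum_measure fun i _ =>
    (integrable_dirac' hf.stronglyMeasurable (by simp)).smul_measure ENNReal.ofReal_ne_top]
  refine Finset.sum_congr rfl fun i _ => ?_
  rw [integral_smul_measure, integral_dirac' _ _ hf.stronglyMeasurable,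
    ENNReal.toReal_ofReal (w i).1.2.1, smul_eq_mul]

/-- `atomicMeasure` as a kernel, to form the mixture of atomic measures under a law of `w`. -/
def atomicKernel (ι Z : Type*) [Fintype ι] [MeasurableSpace Z] :
    Kernel (ι → unitInterval × Z) Z where
  toFun := atomicMeasure
  measurable' := Measure.measurable_of_measurable_coe _ fun s hs => by
    simp only [atomicMeasure_apply hs]
    have := measurable_one.indicator (f := (1 : Z → ℝ≥0∞)) hs
    fun_prop

instance : IsFiniteKernel (atomicKernel ι Z) :=
  ⟨Fintype.card ι, ENNReal.natCast_lt_top _, fun w => by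
    change atomicMeasure w univ ≤ _
    rw [atomicMeasure_apply MeasurableSet.univ, ← nsmul_one, ← Finset.card_univ]
    refine Finset.sum_le_card_nsmul _ _ _ fun i _ => ?_
    simpa using (w i).1.2.2⟩

lemma atomicKernel_comp_le (κ : Measure (ι → unitInterval × Z)) :
    atomicKernel ι Z ∘ₘ κ ≤ ∑ i, κ.map fun w => (w i).2 := by
  refine Measure.le_iff.2 fun s hs => ?_
  have hmeas : ∀ i, Measurable fun w : ι → unitInterval × Z => (w i).2 := fun i => by fun_prop
  rw [Measure.bind_apply hs (atomicKernel ι Z).aemeasurable, Measure.finsetSum_apply]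
  calc ∫⁻ w, atomicKernel ι Z w s ∂κ
      ≤ ∫⁻ w, ∑ i, ((fun w => (w i).2) ⁻¹' s).indicator 1 w ∂κ := lintegral_mono fun w => by
        change atomicMeasure w s ≤ _
        rw [atomicMeasure_apply hs]
        exact Finset.sum_le_sum fun i _ =>
          mul_le_of_le_one_left' (ENNReal.ofReal_le_one.2 (w i).1.2.2)
    _ = ∑ i, κ.map (fun w => (w i).2) s := by
        rw [lintegral_finsetSum _ fun i _ => measurable_one.indicator (hmeas i hs)]
        refine Finset.sum_congr rfl fun i _ => ?_
        rw [lintegral_indicator_one (hmeas i hs), Measure.map_apply (hmeas i) hs]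

lemma exists_smul_atomicMeasure_eq [MeasurableSingletonClass Z] {S : Finset Z}
    (hS : α (↑S)ᶜ = 0) {K : ℝ≥0∞} (hK : K ≠ 0) (hK_top : K ≠ ∞) (hle : α univ ≤ K) :
    ∃ (n : ℕ) (w : Fin n → unitInterval × Z), K • atomicMeasure w = α ∧ ∀ i, (w i).2 ∈ S := by
  have hle_one : ∀ z, α {z} / K ≤ 1 := fun z =>
    ENNReal.div_le_of_le_mul (by simpa using (measure_mono (subset_univ {z})).trans hle)
  have hmem : ∀ z, (α {z} / K).toReal ∈ unitInterval := fun z =>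
    ⟨ENNReal.toReal_nonneg, ENNReal.toReal_le_of_le_ofReal zero_le_one (by simpa using hle_one z)⟩
  refine ⟨S.card, fun i => (⟨_, hmem (S.equivFin.symm i)⟩, S.equivFin.symm i), ?_,
    fun i => (S.equivFin.symm i).2⟩
  have hmass : ∀ z, K * ENNReal.ofReal (α {z} / K).toReal = α {z} := fun z => by
    rw [ENNReal.ofReal_toReal ((hle_one z).trans_lt ENNReal.one_lt_top).ne,
      ENNReal.mul_div_cancel hK hK_top]
  calc K • atomicMeasure _
      = ∑ i, α {(S.equivFin.symm i : Z)} • Measure.dirac (S.equivFin.symm i : Z) := by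
        simp only [atomicMeasure, Finset.smul_sum, smul_smul, hmass]
    _ = ∑ z : S, α {(z : Z)} • Measure.dirac (z : Z) :=
        S.equivFin.symm.sum_comp fun z : S => α {(z : Z)} • Measure.dirac (z : Z)
    _ = ∑ z ∈ S, α {z} • Measure.dirac z :=
        Finset.sum_coe_sort S fun z => α {z} • Measure.dirac z
    _ = α := (Measure.ae_mem_finset_iff.1 hS).symm

end AtomicMeasure

section FiberBalance

variable {ι ι' Y Z : Type*} [Fintype ι] [Fintype ι'] [MeasurableSpace Z]
  {t : Z → Y} {ψ : Z → ℝ} {α α' : Measure Z} {w : ι → unitInterval × Z} {w' : ι' → unitInterval × Z}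

/-- The analogue of `IsBalanced` for finitely supported measures: the signed measures `ψ • α` and
`ψ • α'` give the same mass to each fiber of `t`. -/
def IsFiberBalanced (t : Z → Y) (ψ : Z → ℝ) (α α' : Measure Z) : Prop :=
  ∀ y, ∫ z in {z | t z = y}, ψ z ∂α' = ∫ z in {z | t z = y}, ψ z ∂α

lemma isFiberBalanced_smul_iff {K : ℝ≥0∞} (hK : K ≠ 0) (hK_top : K ≠ ∞) :
    IsFiberBalanced t ψ (K • α) (K • α') ↔ IsFiberBalanced t ψ α α' := by
  simp only [IsFiberBalanced, Measure.restrict_smul, integral_smul_measure, smul_eq_mul,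
    mul_right_inj' (ENNReal.toReal_pos hK hK_top).ne']

variable [MeasurableSpace Y]

lemma integral_comp_mul_eq_sum_setIntegral_fiber [MeasurableSingletonClass Y] (ht : Measurable t)
    {V : Finset Y} (hV : ∀ᵐ z ∂α, t z ∈ V) {h : Y → ℝ}
    (hint : Integrable (fun z => h (t z) * ψ z) α) :
    ∫ z, h (t z) * ψ z ∂α = ∑ y ∈ V, h y * ∫ z in {z | t z = y}, ψ z ∂α := by
  have hfiber : ∀ y, MeasurableSet {z | t z = y} := fun y => ht (measurableSet_singleton y)
  have hunion : ∫ z, h (t z) * ψ z ∂α = ∫ z in ⋃ y ∈ V, {z | t z = y}, h (t z) * ψ z ∂α := by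
    rw [Measure.restrict_eq_self_of_ae_mem]
    simpa using hV
  rw [hunion, integral_biUnion_finset _ (fun y _ => hfiber y) ?_ fun y _ => hint.integrableOn]
  · refine Finset.sum_congr rfl fun y _ => ?_
    rw [← integral_const_mul]
    exact setIntegral_congr_fun (hfiber y) fun z (hz : t z = y) => by simp only [hz]
  · exact fun y _ y' _ hne => disjoint_left.2 fun z hz hz' => hne (hz.symm.trans hz')

lemma IsFiberBalanced.isBalanced [MeasurableSingletonClass Y] (h : IsFiberBalanced t ψ α α')
    (ht : Measurable t) {V : Finset Y} (hV : ∀ᵐ z ∂α, t z ∈ V) (hV' : ∀ᵐ z ∂α', t z ∈ V)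
    (hψ : Integrable ψ α) (hψ' : Integrable ψ α') : IsBalanced t ψ α α' := fun g hg hbdd => by
  rw [integral_comp_mul_eq_sum_setIntegral_fiber ht hV
      (integrable_comp_mul_of_bounded ht hg hbdd hψ),
    integral_comp_mul_eq_sum_setIntegral_fiber ht hV'
      (integrable_comp_mul_of_bounded ht hg hbdd hψ')]
  exact Finset.sum_congr rfl fun y _ => by rw [h y]

lemma IsFiberBalanced.isBalanced_atomicMeasure [MeasurableSingletonClass Y]
    (h : IsFiberBalanced t ψ (atomicMeasure w) (atomicMeasure w')) (ht : Measurable t)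
    (hψ : Measurable ψ) : IsBalanced t ψ (atomicMeasure w) (atomicMeasure w') := by
  classical
  let V : Finset Y :=
    Finset.univ.image (fun i => t (w i).2) ∪ Finset.univ.image (fun i => t (w' i).2)
  have hwV : ∀ i, t (w i).2 ∈ V := fun i => by simp [V]
  have hwV' : ∀ i, t (w' i).2 ∈ V := fun i => by simp [V]
  have hV : MeasurableSet (t ⁻¹' V) := ht V.measurableSet
  exact h.isBalanced ht (ae_atomicMeasure hV hwV) (ae_atomicMeasure hV hwV')
    (integrable_atomicMeasure hψ) (integrable_atomicMeasure hψ)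

lemma setIntegral_fiber_atomicMeasure [MeasurableSingletonClass Y] (ht : Measurable t)
    (hψ : Measurable ψ) (y : Y) :
    ∫ z in {z | t z = y}, ψ z ∂(atomicMeasure w) =
      ∑ i, (w i).1 * {z | t z = y}.indicator ψ (w i).2 := by
  have hfiber : MeasurableSet {z | t z = y} := ht (measurableSet_singleton y)
  rw [← integral_indicator hfiber, integral_atomicMeasure (hψ.indicator hfiber)]

lemma isFiberBalanced_atomicMeasure_iff [MeasurableSingletonClass Y] (ht : Measurable t)
    (hψ : Measurable ψ) :
    IsFiberBalanced t ψ (atomicMeasure w) (atomicMeasure w') ↔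
      ∀ l : ι ⊕ ι', ∑ i, (w' i).1 * {z | t z = t (Sum.elim w w' l).2}.indicator ψ (w' i).2 =
        ∑ i, (w i).1 * {z | t z = t (Sum.elim w w' l).2}.indicator ψ (w i).2 := by
  simp only [IsFiberBalanced, setIntegral_fiber_atomicMeasure ht hψ]
  refine ⟨fun h l => h _, fun h y => ?_⟩
  by_cases hy : ∃ l, t (Sum.elim w w' l).2 = y
  · obtain ⟨l, rfl⟩ := hy
    exact h l
  · simp only [Sum.exists, Sum.elim_inl, Sum.elim_inr, not_or, not_exists] at hy
    simp [indicator_of_notMem, hy]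

lemma measurableSet_isFiberBalanced_atomicMeasure [MeasurableEq Y] (ht : Measurable t)
    (hψ : Measurable ψ) :
    MeasurableSet {e : (ι → unitInterval × Z) × (ι' → unitInterval × Z) |
      IsFiberBalanced t ψ (atomicMeasure e.1) (atomicMeasure e.2)} := by
  simp only [isFiberBalanced_atomicMeasure_iff ht hψ, ofPred_forall]
  refine MeasurableSet.iInter fun l => ?_
  have hl : Measurable fun e : (ι → unitInterval × Z) × (ι' → unitInterval × Z) =>
      t (Sum.elim e.1 e.2 l).2 := by
    cases l <;> simp only [Sum.elim_inl, Sum.elim_inr] <;> fun_prop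
  have hterm : ∀ p : (ι → unitInterval × Z) × (ι' → unitInterval × Z) → unitInterval × Z,
      Measurable p → Measurable fun e =>
        ((p e).1 : ℝ) * {z | t z = t (Sum.elim e.1 e.2 l).2}.indicator ψ (p e).2 := fun p hp =>
    (measurable_subtype_coe.comp hp.fst).mul
      ((hψ.comp hp.snd).indicator (measurableSet_eq_fun (ht.comp hp.snd) hl))
  exact measurableSet_eq_fun
    (Finset.measurable_fun_sum _ fun i _ => hterm (fun e => e.2 i) (by fun_prop))
    (Finset.measurable_fun_sum _ fun i _ => hterm (fun e => e.1 i) (by fun_prop))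

end FiberBalance

section FiniteOptimality

variable {J Y Z : Type*} [Finite J] [MeasurableSpace Y] [MeasurableEq Y] [TopologicalSpace Z]
  [PolishSpace Z] [MeasurableSpace Z] [BorelSpace Z] {t : J → Z → Y} {ψ : J → Z → ℝ}
  {c c' : Z → ℝ} {π : Measure Z} [IsFiniteMeasure π]

lemma exists_measurableSet_forall_atomicMeasure_not_isImprovement (ht : ∀ j, Measurable (t j))
    (hψ : ∀ j, Measurable (ψ j)) (hc : Measurable c) (hc' : Measurable c')
    (hcπ : Integrable c π) (hcπ' : Integrable c' π)
    (hopt : ∀ π' : Measure Z, IsFiniteMeasure π' → (∀ j, IsBalanced (t j) (ψ j) π π') →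
      Integrable c π' → Integrable c' π' → ¬ IsImprovement c c' π π')
    (ι ι' : Type*) [Fintype ι] [Fintype ι'] :
    ∃ Γ, MeasurableSet Γ ∧ π Γᶜ = 0 ∧
      ∀ (w : ι → unitInterval × Z) (w' : ι' → unitInterval × Z), (∀ i, (w i).2 ∈ Γ) →
        (∀ j, IsFiberBalanced (t j) (ψ j) (atomicMeasure w) (atomicMeasure w')) →
          ¬ IsImprovement c c' (atomicMeasure w) (atomicMeasure w') := by
  let k : Kernel ((ι → unitInterval × Z) × (ι' → unitInterval × Z)) Z :=
    (atomicKernel ι Z).comap Prod.fst measurable_fst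
  let k' : Kernel ((ι → unitInterval × Z) × (ι' → unitInterval × Z)) Z :=
    (atomicKernel ι' Z).comap Prod.snd measurable_snd
  have hB : MeasurableSet ((⋂ j, {e | IsFiberBalanced (t j) (ψ j) (k e) (k' e)}) ∩
      {e | IsImprovement c c' (k e) (k' e)}) :=
    (MeasurableSet.iInter fun j => measurableSet_isFiberBalanced_atomicMeasure (ht j) (hψ j)).inter
      (measurableSet_isImprovement hc hc')
  rcases exists_measurableSet_or_exists_measure_sum_map_le (ρ := π)
    (p := fun (i : ι) (e : (ι → unitInterval × Z) × (ι' → unitInterval × Z)) => (e.1 i).2)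
    (fun i => by fun_prop) hB with ⟨Γ, hΓ, hπΓ, hBΓ⟩ | ⟨κ, hκ, hκ_ne, hκB, hκ_le⟩
  · refine ⟨Γ, hΓ, hπΓ, fun w w' hw hbal himp => ?_⟩
    obtain ⟨i, hi⟩ := hBΓ (w, w') ⟨mem_iInter.2 hbal, himp⟩
    exact hi (hw i)
  · have hle : k ∘ₘ κ ≤ π := by
      have hk : k ∘ₘ κ = atomicKernel ι Z ∘ₘ κ.map Prod.fst := by
        rw [← Measure.deterministic_comp_eq_map measurable_fst, Measure.comp_assoc,
          Kernel.comp_deterministic_eq_comap]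
      have hmap : ∀ i : ι, (κ.map Prod.fst).map (fun w => (w i).2) = κ.map fun e => (e.1 i).2 :=
        fun i => Measure.map_map (by fun_prop) measurable_fst
      rw [hk]
      exact (atomicKernel_comp_le _).trans (by simpa only [hmap] using hκ_le)
    obtain ⟨π', hπ', hbal, hc_int, hc_int', himp⟩ := exists_isImprovement_of_comp_measure_le
      (k := k) (k' := k') ht hψ hc hc' hcπ hcπ' hκ_ne hle
      (fun f hf e => (integrable_atomicMeasure hf).add_measure (integrable_atomicMeasure hf)) <| by
        filter_upwards [hκB] with e he
        exact ⟨fun j => (mem_iInter.1 he.1 j).isBalanced_atomicMeasure (ht j) (hψ j), he.2⟩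
    exact absurd himp (hopt π' hπ' hbal hc_int hc_int')

theorem exists_measurableSet_forall_not_isImprovement (ht : ∀ j, Measurable (t j))
    (hψ : ∀ j, Measurable (ψ j)) (hc : Measurable c) (hc' : Measurable c')
    (hcπ : Integrable c π) (hcπ' : Integrable c' π)
    (hopt : ∀ π' : Measure Z, IsFiniteMeasure π' → (∀ j, IsBalanced (t j) (ψ j) π π') →
      Integrable c π' → Integrable c' π' → ¬ IsImprovement c c' π π') :
    ∃ Γ, MeasurableSet Γ ∧ π Γᶜ = 0 ∧ ∀ (S S' : Finset Z) (α α' : Measure Z),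
      IsFiniteMeasure α → IsFiniteMeasure α' → ↑S ⊆ Γ → α (↑S)ᶜ = 0 → α' (↑S')ᶜ = 0 →
        (∀ j, IsFiberBalanced (t j) (ψ j) α α') → ¬ IsImprovement c c' α α' := by
  choose Γ hΓ hπΓ hΓ_opt using fun n m : ℕ =>
    exists_measurableSet_forall_atomicMeasure_not_isImprovement ht hψ hc hc' hcπ hcπ' hopt
      (Fin n) (Fin m)
  refine ⟨⋂ n, ⋂ m, Γ n m, .iInter fun n => .iInter fun m => hΓ n m, ?_, ?_⟩
  · simp only [compl_iInter, measure_iUnion_null_iff, hπΓ, implies_true]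
  intro S S' α α' _ _ hSΓ hαS hαS' hbal
  obtain ⟨K, hK, hK_top, hαK, hαK'⟩ : ∃ K : ℝ≥0∞, K ≠ 0 ∧ K ≠ ∞ ∧ α univ ≤ K ∧ α' univ ≤ K :=
    ⟨α univ + α' univ + 1, by simp, by simp, le_add_right le_self_add, le_add_right le_add_self⟩
  obtain ⟨n, w, rfl, hwS⟩ := exists_smul_atomicMeasure_eq hαS hK hK_top hαK
  obtain ⟨m, w', rfl, -⟩ := exists_smul_atomicMeasure_eq hαS' hK hK_top hαK'
  simp only [isFiberBalanced_smul_iff hK hK_top] at hbal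
  rw [isImprovement_smul_iff hK hK_top]
  exact hΓ_opt n m w w' (fun i => mem_iInter₂.1 (hSΓ (hwS i)) n m) hbal

end FiniteOptimality

section Marginals

variable {Y Z : Type*} [MeasurableSpace Y] [MeasurableSpace Z] {t : Z → Y} {α α' : Measure Z}

lemma IsBalanced.map_eq [IsFiniteMeasure α] [IsFiniteMeasure α'] (h : IsBalanced t 1 α α')
    (ht : Measurable t) : α'.map t = α.map t := by
  refine Measure.ext fun s hs => ?_
  have hint : ∀ β : Measure Z, ∫ z, s.indicator 1 (t z) * (1 : Z → ℝ) z ∂β = β.real (t ⁻¹' s) :=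
    fun β => by
      simp only [Pi.one_apply, mul_one]
      exact integral_indicator_one (ht hs)
  have hbdd : ∃ C, ∀ y, |s.indicator (1 : Y → ℝ) y| ≤ C :=
    ⟨1, fun y => by by_cases hy : y ∈ s <;> simp [hy]⟩
  rw [Measure.map_apply ht hs, Measure.map_apply ht hs, ← measureReal_eq_measureReal_iff, ← hint,
    ← hint, h _ (measurable_one.indicator hs) hbdd]

lemma isFiberBalanced_one_of_map_eq [MeasurableSingletonClass Y] (ht : Measurable t)
    (h : α'.map t = α.map t) : IsFiberBalanced t 1 α α' := fun y => by
  have hfiber : α' (t ⁻¹' {y}) = α (t ⁻¹' {y}) := by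
    rw [← Measure.map_apply ht (measurableSet_singleton y), h,
      Measure.map_apply ht (measurableSet_singleton y)]
  change ∫ _ in t ⁻¹' {y}, 1 ∂α' = ∫ _ in t ⁻¹' {y}, 1 ∂α
  rw [setIntegral_const, setIntegral_const, measureReal_def, measureReal_def, hfiber]

lemma integrable_of_measure_compl_finset_eq_zero [MeasurableSingletonClass Z] [IsFiniteMeasure α]
    {S : Finset Z} (hS : α (↑S)ᶜ = 0) (f : Z → ℝ) : Integrable f α := by
  rw [← Measure.restrict_eq_self_of_ae_mem (mem_ae_iff.2 hS)]
  exact IntegrableOn.finset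

end Marginals

section Martingale

variable {μ ν : Measure ℝ} {π π' α α' : Measure (ℝ × ℝ)}

/-- The pairs `(t, ψ)` for which `IsBalanced t ψ π π'` expresses that the plans `π` and `π'` have
the same marginals and the same conditional mean displacement. -/
def martingaleConstraint : Fin 3 → (ℝ × ℝ → ℝ) × (ℝ × ℝ → ℝ) :=
  ![(Prod.fst, 1), (Prod.snd, 1), (Prod.fst, fun p => p.2 - p.1)]

lemma measurable_martingaleConstraint (j : Fin 3) :
    Measurable (martingaleConstraint j).1 ∧ Measurable (martingaleConstraint j).2 := by
  fin_cases j
  exacts [⟨measurable_fst, measurable_one⟩, ⟨measurable_snd, measurable_one⟩,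
    ⟨measurable_fst, measurable_snd.sub measurable_fst⟩]

lemma IsMartingaleCoupling.of_isBalanced (hπ : IsMartingaleCoupling μ ν π) [IsFiniteMeasure π']
    (h : ∀ j, IsBalanced (martingaleConstraint j).1 (martingaleConstraint j).2 π π') :
    IsMartingaleCoupling μ ν π' := by
  obtain ⟨_, hμ, hν, hmart⟩ := hπ
  have hfst : π'.map Prod.fst = π.map Prod.fst := (h 0).map_eq measurable_fst
  have hsnd : π'.map Prod.snd = π.map Prod.snd := (h 1).map_eq measurable_snd
  have hprob : IsProbabilityMeasure (π'.map Prod.fst) :=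
    hfst ▸ Measure.isProbabilityMeasure_map measurable_fst.aemeasurable
  exact ⟨Measure.isProbabilityMeasure_of_map Prod.fst, hfst.trans hμ, hsnd.trans hν,
    fun g hg hbdd => (h 2 g hg hbdd).trans (hmart g hg hbdd)⟩

lemma IsCompetitor.isFiniteMeasure [IsFiniteMeasure α] (h : IsCompetitor α α') :
    IsFiniteMeasure α' := by
  have : IsFiniteMeasure (α'.map Prod.fst) := h.2.1 ▸ inferInstance
  exact Measure.isFiniteMeasure_of_map measurable_fst.aemeasurable

lemma IsCompetitor.isFiberBalanced [IsFiniteMeasure α] {S : Finset (ℝ × ℝ)} (hS : α (↑S)ᶜ = 0)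
    (h : IsCompetitor α α') (j : Fin 3) :
    IsFiberBalanced (martingaleConstraint j).1 (martingaleConstraint j).2 α α' := by
  have := h.isFiniteMeasure
  obtain ⟨⟨S', hS'⟩, hfst, hsnd, hbary⟩ := h
  have hone := isFiberBalanced_one_of_map_eq measurable_fst hfst
  fin_cases j
  · exact hone
  · exact isFiberBalanced_one_of_map_eq measurable_snd hsnd
  intro x
  have hsub : ∀ (β : Measure (ℝ × ℝ)) [IsFiniteMeasure β] (T : Finset (ℝ × ℝ)), β (↑T)ᶜ = 0 →
      ∫ p in {p : ℝ × ℝ | p.1 = x}, (p.2 - p.1) ∂β =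
        ∫ p in {p : ℝ × ℝ | p.1 = x}, p.2 ∂β -
          x * ∫ p in {p : ℝ × ℝ | p.1 = x}, (1 : ℝ × ℝ → ℝ) p ∂β := fun β _ T hT => by
    have hfiber : MeasurableSet {p : ℝ × ℝ | p.1 = x} := measurable_fst (measurableSet_singleton x)
    have hint := fun f => (integrable_of_measure_compl_finset_eq_zero hT f).integrableOn
      (s := {p | p.1 = x})
    rw [← integral_const_mul, ← integral_sub (hint _) (hint _)]
    exact setIntegral_congr_fun hfiber fun p (hp : p.1 = x) => by simp [hp]
  exact (hsub α' S' hS').trans ((hsub α S hS).trans (by rw [hbary x, hone x])).symm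

end Martingale

theorem modified_variational_lemma_general {μ ν : Measure ℝ} {c c' : ℝ × ℝ → ℝ}
    (hc : Measurable c) (hc' : Measurable c') {π : Measure (ℝ × ℝ)}
    (hπ : IsMartingaleCoupling μ ν π) (hfin : Integrable c π) (hfin' : Integrable c' π)
    (hmin : ∀ π', IsMartingaleCoupling μ ν π' → Integrable c π' → ∫ p, c p ∂π ≤ ∫ p, c p ∂π')
    (hmax : ∀ π', IsMartingaleCoupling μ ν π' → Integrable c π' →
      ∫ p, c p ∂π' = ∫ p, c p ∂π → Integrable c' π' → ∫ p, c' p ∂π' ≤ ∫ p, c' p ∂π) :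
    ∃ Γ, MeasurableSet Γ ∧ π Γ = 1 ∧ ∀ α, IsFiniteMeasure α → HasFiniteSupportIn α Γ →
      ∀ α', IsCompetitor α α' → ∫ p, c p ∂α ≤ ∫ p, c p ∂α' ∧
        (∫ p, c p ∂α = ∫ p, c p ∂α' → ∫ p, c' p ∂α' ≤ ∫ p, c' p ∂α) := by
  have := hπ.1
  obtain ⟨Γ, hΓ, hπΓ, hΓ_opt⟩ := exists_measurableSet_forall_not_isImprovement
    (fun j => (measurable_martingaleConstraint j).1)
    (fun j => (measurable_martingaleConstraint j).2) hc hc' hfin hfin'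
    fun π' _ hbal hint hint' => not_isImprovement_iff.2
      ⟨hmin π' (hπ.of_isBalanced hbal) hint,
        fun heq => hmax π' (hπ.of_isBalanced hbal) hint heq.symm hint'⟩
  refine ⟨Γ, hΓ, (prob_compl_eq_zero_iff hΓ).1 hπΓ, fun α _ ⟨S, hSΓ, hαS⟩ α' hα' => ?_⟩
  obtain ⟨S', hαS'⟩ := hα'.1
  exact not_isImprovement_iff.1 (hΓ_opt S S' α α' inferInstance hα'.isFiniteMeasure hSΓ hαS hαS'
    (hα'.isFiberBalanced hαS))

/-- Modified variational lemma with a secondary optimisation: a `c`-minimising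
martingale transport plan which, among all `c`-minimisers, maximises `c'`, is
concentrated on a Borel set `Γ` on which no competitor can decrease the `c`-cost,
and any competitor leaving the `c`-cost unchanged cannot increase the `c'`-cost. -/
theorem modified_variational_lemma
    (μ ν : Measure ℝ) [IsProbabilityMeasure μ] [IsProbabilityMeasure ν]
    (hconv : InConvexOrder μ ν)
    (c c' : ℝ → ℝ → ℝ)
    (hc : Measurable (fun p : ℝ × ℝ => c p.1 p.2))
    (hc' : Measurable (fun p : ℝ × ℝ => c' p.1 p.2))
    (a b : ℝ → ℝ) (ha : Integrable a μ) (hb : Integrable b ν)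
    (hlower : ∀ x y : ℝ, a x + b y ≤ c x y)
    (f g : ℝ → ℝ) (hf : Integrable f μ) (hg : Integrable g ν)
    (hupper : ∀ x y : ℝ, c' x y ≤ f x + g y)
    (π : Measure (ℝ × ℝ)) (hπ : IsMartingaleCoupling μ ν π)
    (hfin : Integrable (fun p : ℝ × ℝ => c p.1 p.2) π)
    (hfin' : Integrable (fun p : ℝ × ℝ => c' p.1 p.2) π)
    (hmin : ∀ π' : Measure (ℝ × ℝ), IsMartingaleCoupling μ ν π' →
      Integrable (fun p : ℝ × ℝ => c p.1 p.2) π' →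
      ∫ p : ℝ × ℝ, c p.1 p.2 ∂π ≤ ∫ p : ℝ × ℝ, c p.1 p.2 ∂π')
    (hmax : ∀ π' : Measure (ℝ × ℝ), IsMartingaleCoupling μ ν π' →
      Integrable (fun p : ℝ × ℝ => c p.1 p.2) π' →
      ∫ p : ℝ × ℝ, c p.1 p.2 ∂π' = ∫ p : ℝ × ℝ, c p.1 p.2 ∂π →
      Integrable (fun p : ℝ × ℝ => c' p.1 p.2) π' →
      ∫ p : ℝ × ℝ, c' p.1 p.2 ∂π' ≤ ∫ p : ℝ × ℝ, c' p.1 p.2 ∂π) :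
    ∃ Γ : Set (ℝ × ℝ), MeasurableSet Γ ∧ π Γ = 1 ∧
      ∀ α : Measure (ℝ × ℝ), IsFiniteMeasure α → HasFiniteSupportIn α Γ →
        ∀ α' : Measure (ℝ × ℝ), IsCompetitor α α' →
          (∫ p : ℝ × ℝ, c p.1 p.2 ∂α ≤ ∫ p : ℝ × ℝ, c p.1 p.2 ∂α') ∧
          (∫ p : ℝ × ℝ, c p.1 p.2 ∂α = ∫ p : ℝ × ℝ, c p.1 p.2 ∂α' →
            ∫ p : ℝ × ℝ, c' p.1 p.2 ∂α' ≤ ∫ p : ℝ × ℝ, c' p.1 p.2 ∂α) :=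
  modified_variational_lemma_general hc hc' hπ hfin hfin' hmin hmax
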